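/- Under a scaling of the heterogeneous key predistribution model with on/off channels satisfying the scaling condition Λ_1(n) = α_n λ_1(n) = c_n (log n)/n with lim_{n→∞} c_n = c, if c > 1 then the probability that the random graph G(n; μ, K_n, P_n, α_n) has no isolated nodes tends to 1 as n → ∞. -/

import Mathlib

/-!
Condition on the class `i` and the key ring of a vertex: every other vertex is then independently
adjacent to it with probability `α λ_i`, so the vertex is isolated with probability
`∑ i, μ_i (1 - α λ_i) ^ (n - 1)`. Larger key rings meet more rings, so `λ_1` is the least of the
`λ_i`, and by the union bound some vertex is isolated with probability at most
`n (1 - Λ_1) ^ (n - 1) ≤ exp (1 - (n Λ_1 - log n))`. This tends to `0` as soon as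
`n Λ_1 - log n → ∞`; under the scaling of the theorem, `n Λ_1 - log n = (c_n - 1) log n`.
-/

open Filter

/-- Probability that a uniformly random `b`-subset of a `P`-set avoids a fixed `a`-subset. -/
noncomputable def avoidProb (P a b : ℕ) : ℝ := ((P - a).choose b : ℝ) / (P.choose b : ℝ)

/-- `p_{ab}` : probability that independent uniformly random key rings of sizes
`a` and `b` (from a pool of size `P`) intersect. -/
noncomputable def pEdge (P a b : ℕ) : ℝ := 1 - avoidProb P a b

/-- `λ_i` : mean edge probability of a class-`i` node in the inhomogeneous random key graph. -/
noncomputable def lamb {r : ℕ} (μ : Fin (r + 1) → ℝ) (K : Fin (r + 1) → ℕ) (P : ℕ)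
    (i : Fin (r + 1)) : ℝ :=
  ∑ j, μ j * pEdge P (K i) (K j)

/-- A configuration of the model: a class for each vertex, a key ring for each vertex,
and an on/off state for each (unordered) channel. -/
abbrev Config (n r P : ℕ) := (Fin n → Fin (r + 1)) × (Fin n → Finset (Fin P)) × (Sym2 (Fin n) → Bool)

/-- Probability weight of a configuration: classes are i.i.d. with law `μ`; given its class `i`,
a vertex's key ring is uniform among the `C(P, K i)` subsets of size `K i`; channels over
distinct pairs are i.i.d. Bernoulli(`α`) (diagonal channel variables are forced to `false`). -/
noncomputable def wt {n r P : ℕ} (μ : Fin (r + 1) → ℝ) (K : Fin (r + 1) → ℕ) (α : ℝ)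
    (c : Config n r P) : ℝ :=
  (∏ x : Fin n, μ (c.1 x)) *
    (∏ x : Fin n, if (c.2.1 x).card = K (c.1 x) then ((P.choose (K (c.1 x)) : ℝ))⁻¹ else 0) *
    (∏ e : Sym2 (Fin n),
      if e.IsDiag then (if c.2.2 e then 0 else 1) else (if c.2.2 e then α else 1 - α))

open Classical in
/-- Probability of an event under the heterogeneous key predistribution model
with on/off channels. -/
noncomputable def pr {n r P : ℕ} (μ : Fin (r + 1) → ℝ) (K : Fin (r + 1) → ℕ) (α : ℝ)
    (E : Config n r P → Prop) : ℝ :=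
  ∑ c : Config n r P, if E c then wt μ K α c else 0

/-- Two vertices are adjacent iff their key rings intersect and the channel between them is on. -/
def Adj {n r P : ℕ} (c : Config n r P) (x y : Fin n) : Prop :=
  x ≠ y ∧ ((c.2.1 x) ∩ (c.2.1 y)).Nonempty ∧ c.2.2 s(x, y) = true

/-- The random graph `G(n; μ, K, P, α)` as a simple graph. -/
def graphOf {n r P : ℕ} (c : Config n r P) : SimpleGraph (Fin n) :=
  SimpleGraph.fromRel (fun x y => ((c.2.1 x) ∩ (c.2.1 y)).Nonempty ∧ c.2.2 s(x, y) = true)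

/-- A vertex is isolated if it has no neighbours. -/
def Isolated {n r P : ℕ} (c : Config n r P) (x : Fin n) : Prop := ∀ y, ¬ Adj c x y

/-- The graph has no isolated nodes. -/
def NoIsolatedNodes {n r P : ℕ} (c : Config n r P) : Prop := ∀ x, ¬ Isolated c x

section IndependentSums

open Finset

variable {ι β R : Type*} [Fintype ι] [DecidableEq ι] [Fintype β] [CommSemiring R]

lemma sum_filter_forall_mem_prod [DecidableEq β] {g : ι → β → R} (hg : ∀ i, ∑ b, g i b = 1)
    (s : Finset ι) (A : ι → Finset β) :
    ∑ f : ι → β with ∀ i ∈ s, f i ∈ A i, ∏ i, g i (f i) = ∏ i ∈ s, ∑ b ∈ A i, g i b := by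
  have hfilter : ({f : ι → β | ∀ i ∈ s, f i ∈ A i} : Finset (ι → β)) =
      Fintype.piFinset fun i => if i ∈ s then A i else univ := by
    ext f
    simp only [mem_filter_univ, Fintype.mem_piFinset]
    refine forall_congr' fun i => ?_
    split_ifs with hi <;> simp [hi]
  have hfactor (i : ι) : ∑ b ∈ (if i ∈ s then A i else univ), g i b =
      if i ∈ s then ∑ b ∈ A i, g i b else 1 := by
    split_ifs
    exacts [rfl, hg i]
  rw [hfilter, ← prod_univ_sum]
  simp only [hfactor, prod_ite_mem, univ_inter]

lemma sum_prod_mul_prod_erase (w : β → R) (k : β → β → R) (x : ι) :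
    ∑ f : ι → β, (∏ y, w (f y)) * ∏ y ∈ univ.erase x, k (f x) (f y) =
      ∑ b, w b * (∑ b', w b' * k b b') ^ (Fintype.card ι - 1) := by
  have hsplit (f : ι → β) : (∏ y, w (f y)) * ∏ y ∈ univ.erase x, k (f x) (f y) =
      w (f x) * ∏ y : {y // y ≠ x}, w (f y) * k (f x) (f y) := by
    rw [← mul_prod_erase univ _ (mem_univ x), mul_assoc, ← prod_mul_distrib,
      prod_subtype (univ.erase x) (p := (· ≠ x)) (by simp)]
  have hcard : Fintype.card ι - 1 = #(univ : Finset {y // y ≠ x}) := by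
    simp [Fintype.card_subtype_compl]
  simp_rw [hsplit]
  rw [← (Equiv.funSplitAt x β).symm.sum_comp, Fintype.sum_prod_type]
  refine sum_congr rfl fun b _ => ?_
  rw [hcard, ← prod_const, Fintype.prod_sum, mul_sum]
  refine sum_congr rfl fun f _ => ?_
  congr 1
  · simp
  · exact prod_congr rfl fun y _ => by simp [y.2]

end IndependentSums

section KeyRings

open Finset

/-- The law of a uniformly random key ring of size `b` from a pool of `P` keys: the mass it
gives to the ring `T`. -/
noncomputable def ringWt {P : ℕ} (b : ℕ) (T : Finset (Fin P)) : ℝ :=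
  if #T = b then (P.choose b : ℝ)⁻¹ else 0

variable {P : ℕ}

lemma ringWt_nonneg (b : ℕ) (T : Finset (Fin P)) : 0 ≤ ringWt b T := by
  unfold ringWt
  positivity

lemma sum_ringWt_disjoint (b : ℕ) (S : Finset (Fin P)) :
    ∑ T with Disjoint S T, ringWt b T = avoidProb P #S b := by
  have hrings : ({T | Disjoint S T ∧ #T = b} : Finset (Finset (Fin P))) = powersetCard b Sᶜ := by
    ext T
    simp [mem_powersetCard, subset_compl_iff_disjoint_left]
  simp only [ringWt]
  rw [← sum_filter, filter_filter, hrings, sum_const, card_powersetCard, card_compl,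
    Fintype.card_fin, nsmul_eq_mul, avoidProb, div_eq_mul_inv]

lemma sum_ringWt {b : ℕ} (hb : b ≤ P) : ∑ T : Finset (Fin P), ringWt b T = 1 := by
  have hchoose : (P.choose b : ℝ) ≠ 0 := by exact_mod_cast (Nat.choose_pos hb).ne'
  simpa [avoidProb, hchoose] using sum_ringWt_disjoint b (∅ : Finset (Fin P))

lemma avoidProb_nonneg (P a b : ℕ) : 0 ≤ avoidProb P a b := by
  unfold avoidProb
  positivity

lemma avoidProb_anti_left (P b : ℕ) : Antitone fun a => avoidProb P a b := by
  intro a a' h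
  simp only [avoidProb]
  gcongr

/-- The conditional probability, given their key rings `S` and `T`, that two distinct vertices are
not adjacent. -/
noncomputable def nonadjProb (α : ℝ) (S T : Finset (Fin P)) : ℝ :=
  if (S ∩ T).Nonempty then 1 - α else 1

lemma sum_ringWt_mul_nonadjProb {b : ℕ} (hb : b ≤ P) (α : ℝ) (S : Finset (Fin P)) :
    ∑ T, ringWt b T * nonadjProb α S T = 1 - α * pEdge P #S b := by
  have hsplit (T : Finset (Fin P)) : ringWt b T * nonadjProb α S T =
      (1 - α) * ringWt b T + α * if Disjoint S T then ringWt b T else 0 := by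
    simp only [nonadjProb, ← not_disjoint_iff_nonempty_inter]
    split_ifs <;> first | contradiction | ring
  simp_rw [hsplit]
  rw [sum_add_distrib, ← mul_sum, ← mul_sum, ← sum_filter, sum_ringWt hb, sum_ringWt_disjoint,
    pEdge]
  ring

end KeyRings

section MeanEdgeProbability

variable {r : ℕ} {μ : Fin (r + 1) → ℝ}

lemma lamb_mono (hμ : ∀ i, 0 ≤ μ i) {K : Fin (r + 1) → ℕ} (hK : Monotone K) (P : ℕ) :
    Monotone (lamb μ K P) := fun _ _ hij =>
  Finset.sum_le_sum fun j _ => mul_le_mul_of_nonneg_left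
    (sub_le_sub_left (avoidProb_anti_left P (K j) (hK hij)) 1) (hμ j)

lemma lamb_le_one (hμ : ∀ i, 0 ≤ μ i) (hμsum : ∑ i, μ i = 1) (K : Fin (r + 1) → ℕ) (P : ℕ)
    (i : Fin (r + 1)) : lamb μ K P i ≤ 1 := by
  rw [← hμsum]
  exact Finset.sum_le_sum fun j _ =>
    mul_le_of_le_one_right (hμ j) (sub_le_self 1 (avoidProb_nonneg P (K i) (K j)))

lemma mul_lamb_le_one (hμ : ∀ i, 0 ≤ μ i) (hμsum : ∑ i, μ i = 1) (K : Fin (r + 1) → ℕ) (P : ℕ)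
    {α : ℝ} (hα : α ∈ Set.Icc (0 : ℝ) 1) (i : Fin (r + 1)) : α * lamb μ K P i ≤ 1 :=
  (mul_le_of_le_one_right hα.1 (lamb_le_one hμ hμsum K P i)).trans hα.2

end MeanEdgeProbability

section WeightFactors

/-- The joint law of the class and the key ring of one vertex: the mass it gives to `s`. -/
noncomputable def nodeWt {r P : ℕ} (μ : Fin (r + 1) → ℝ) (K : Fin (r + 1) → ℕ)
    (s : Fin (r + 1) × Finset (Fin P)) : ℝ :=
  μ s.1 * ringWt (K s.1) s.2

/-- The law of the state of the channel `e`: the mass it gives to `b`. As in `wt`, diagonal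
channels are always off. -/
noncomputable def chanWt {n : ℕ} (α : ℝ) (e : Sym2 (Fin n)) (b : Bool) : ℝ :=
  if e.IsDiag then (if b then 0 else 1) else (if b then α else 1 - α)

variable {n r P : ℕ} {μ : Fin (r + 1) → ℝ} {K : Fin (r + 1) → ℕ} {α : ℝ}

lemma wt_eq_prod_nodeWt_mul_prod_chanWt (μ : Fin (r + 1) → ℝ) (K : Fin (r + 1) → ℕ) (α : ℝ)
    (t : Fin n → Fin (r + 1)) (S : Fin n → Finset (Fin P)) (B : Sym2 (Fin n) → Bool) :
    wt μ K α (t, S, B) = (∏ x, nodeWt μ K (t x, S x)) * ∏ e, chanWt α e (B e) := by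
  simp only [wt, nodeWt, ringWt, chanWt, Finset.prod_mul_distrib]

lemma nodeWt_nonneg (hμ : ∀ i, 0 ≤ μ i) (K : Fin (r + 1) → ℕ)
    (s : Fin (r + 1) × Finset (Fin P)) : 0 ≤ nodeWt μ K s :=
  mul_nonneg (hμ s.1) (ringWt_nonneg _ _)

lemma chanWt_nonneg (hα : α ∈ Set.Icc (0 : ℝ) 1) (e : Sym2 (Fin n)) (b : Bool) :
    0 ≤ chanWt α e b := by
  unfold chanWt
  split_ifs
  exacts [le_rfl, zero_le_one, hα.1, sub_nonneg.2 hα.2]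

lemma wt_nonneg (hμ : ∀ i, 0 ≤ μ i) (K : Fin (r + 1) → ℕ) (hα : α ∈ Set.Icc (0 : ℝ) 1)
    (c : Config n r P) : 0 ≤ wt μ K α c := by
  rw [wt_eq_prod_nodeWt_mul_prod_chanWt μ K α c.1 c.2.1 c.2.2]
  exact mul_nonneg (Finset.prod_nonneg fun _ _ => nodeWt_nonneg hμ K _)
    (Finset.prod_nonneg fun _ _ => chanWt_nonneg hα _ _)

lemma sum_nodeWt (hμsum : ∑ i, μ i = 1) (hK : ∀ i, K i ≤ P) :
    ∑ s : Fin (r + 1) × Finset (Fin P), nodeWt μ K s = 1 := by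
  simp only [Fintype.sum_prod_type, nodeWt, ← Finset.mul_sum, sum_ringWt (hK _), mul_one, hμsum]

lemma sum_nodeWt_mul_nonadjProb (hμsum : ∑ i, μ i = 1) (hK : ∀ i, K i ≤ P) (α : ℝ)
    {i : Fin (r + 1)} {S : Finset (Fin P)} (hS : S.card = K i) :
    ∑ s, nodeWt μ K s * nonadjProb α S s.2 = 1 - α * lamb μ K P i := by
  simp only [Fintype.sum_prod_type, nodeWt, mul_assoc, ← Finset.mul_sum,
    sum_ringWt_mul_nonadjProb (hK _), hS, lamb]
  simp only [mul_sub, mul_one, Finset.sum_sub_distrib, hμsum, Finset.mul_sum, mul_left_comm α]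

lemma sum_chanWt (α : ℝ) (e : Sym2 (Fin n)) : ∑ b, chanWt α e b = 1 := by
  by_cases he : e.IsDiag <;> simp [chanWt, he]

lemma sum_config (F : Config n r P → ℝ) :
    ∑ c, F c = ∑ s : Fin n → Fin (r + 1) × Finset (Fin P), ∑ B,
      F (fun y => (s y).1, fun y => (s y).2, B) := by
  calc ∑ c, F c
    _ = ∑ q : (Fin n → Fin (r + 1)) × (Fin n → Finset (Fin P)), ∑ B, F (q.1, q.2, B) := by
        simp only [Fintype.sum_prod_type]
    _ = _ := ((Equiv.arrowProdEquivProdArrow _ _ _).sum_comp _).symm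

lemma sum_wt (hμsum : ∑ i, μ i = 1) (hK : ∀ i, K i ≤ P) (α : ℝ) :
    ∑ c : Config n r P, wt μ K α c = 1 := by
  simp only [sum_config, wt_eq_prod_nodeWt_mul_prod_chanWt, ← Finset.mul_sum,
    ← Fintype.prod_sum fun e b => chanWt α e b, sum_chanWt, Finset.prod_const_one, mul_one]
  simp only [← Fintype.prod_sum fun _ s => nodeWt μ K s, sum_nodeWt hμsum hK,
    Finset.prod_const_one]

end WeightFactors

section Probability

variable {n r P : ℕ} {μ : Fin (r + 1) → ℝ} {K : Fin (r + 1) → ℕ} {α : ℝ}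

lemma pr_nonneg (hμ : ∀ i, 0 ≤ μ i) (K : Fin (r + 1) → ℕ) (hα : α ∈ Set.Icc (0 : ℝ) 1)
    (E : Config n r P → Prop) : 0 ≤ pr μ K α E := by
  classical
  exact Finset.sum_nonneg fun c _ => ite_nonneg (wt_nonneg hμ K hα c) le_rfl

lemma pr_not (hμsum : ∑ i, μ i = 1) (hK : ∀ i, K i ≤ P) (α : ℝ) (E : Config n r P → Prop) :
    pr μ K α (fun c => ¬ E c) = 1 - pr μ K α E := by
  rw [eq_sub_iff_add_eq, pr, pr, ← Finset.sum_add_distrib, ← sum_wt hμsum hK α]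
  exact Finset.sum_congr rfl fun c _ => by by_cases h : E c <;> simp [h]

lemma pr_exists_le_sum {ι : Type*} [Fintype ι] (hμ : ∀ i, 0 ≤ μ i) (K : Fin (r + 1) → ℕ)
    (hα : α ∈ Set.Icc (0 : ℝ) 1) (E : ι → Config n r P → Prop) :
    pr μ K α (fun c => ∃ x, E x c) ≤ ∑ x, pr μ K α (E x) := by
  classical
  simp only [pr]
  rw [Finset.sum_comm]
  refine Finset.sum_le_sum fun c _ => ?_
  have hterm (x : ι) : 0 ≤ if E x c then wt μ K α c else 0 :=
    ite_nonneg (wt_nonneg hμ K hα c) le_rfl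
  split_ifs with h
  · obtain ⟨x, hx⟩ := h
    simpa only [if_pos hx] using
      Finset.single_le_sum (fun y _ => hterm y) (Finset.mem_univ x)
  · exact Finset.sum_nonneg fun x _ => hterm x

lemma pr_noIsolatedNodes_eq (hμsum : ∑ i, μ i = 1) (hK : ∀ i, K i ≤ P) (α : ℝ) :
    pr μ K α (fun c : Config n r P => NoIsolatedNodes c) =
      1 - pr μ K α (fun c : Config n r P => ∃ x, Isolated c x) := by
  simp only [← pr_not hμsum hK, NoIsolatedNodes, not_exists]

end Probability

section Isolation

open Finset

variable {n r P : ℕ} {μ : Fin (r + 1) → ℝ} {K : Fin (r + 1) → ℕ} {α : ℝ}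

/-- The channels at `x` whose other endpoint shares a key with `x`, where `S` assigns the key
rings: `x` is isolated exactly when all of them are off. -/
def keySharingChannels (S : Fin n → Finset (Fin P)) (x : Fin n) : Finset (Sym2 (Fin n)) :=
  ({y ∈ univ.erase x | (S x ∩ S y).Nonempty} : Finset (Fin n)).image fun y => s(x, y)

lemma isolated_iff_forall_keySharingChannels (t : Fin n → Fin (r + 1))
    (S : Fin n → Finset (Fin P)) (B : Sym2 (Fin n) → Bool) (x : Fin n) :
    Isolated (t, S, B) x ↔ ∀ e ∈ keySharingChannels S x, B e = false := by
  simp only [Isolated, Adj, keySharingChannels, forall_mem_image, mem_filter, mem_erase, mem_univ,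
    and_true, not_and, Bool.not_eq_true, and_imp, @ne_comm (Fin n)]

open Classical in
lemma sum_isolated_prod_chanWt (α : ℝ) (t : Fin n → Fin (r + 1)) (S : Fin n → Finset (Fin P))
    (x : Fin n) :
    ∑ B with Isolated (t, S, B) x, ∏ e, chanWt α e (B e) =
      ∏ y ∈ univ.erase x, nonadjProb α (S x) (S y) := by
  have hoff : ∑ B with Isolated (t, S, B) x, ∏ e, chanWt α e (B e) =
      ∏ e ∈ keySharingChannels S x, chanWt α e false := by
    simpa [isolated_iff_forall_keySharingChannels] using
      sum_filter_forall_mem_prod (sum_chanWt α) (keySharingChannels S x) fun _ => {false}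
  rw [hoff, keySharingChannels, prod_image fun _ _ _ _ h => Sym2.congr_right.1 h, prod_filter]
  refine prod_congr rfl fun y hy => ?_
  simp [nonadjProb, chanWt, (ne_of_mem_erase hy).symm]

lemma pr_isolated_eq_sum_nodeWt (μ : Fin (r + 1) → ℝ) (K : Fin (r + 1) → ℕ) (α : ℝ)
    (x : Fin n) :
    pr μ K α (fun c : Config n r P => Isolated c x) =
      ∑ s : Fin (r + 1) × Finset (Fin P),
        nodeWt μ K s * (∑ s', nodeWt μ K s' * nonadjProb α s.2 s'.2) ^ (n - 1) := by
  classical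
  calc pr μ K α (fun c : Config n r P => Isolated c x)
    _ = ∑ s : Fin n → Fin (r + 1) × Finset (Fin P), (∏ y, nodeWt μ K (s y)) *
          ∏ y ∈ univ.erase x, nonadjProb α (s x).2 (s y).2 := by
        rw [pr, sum_config]
        refine sum_congr rfl fun s _ => ?_
        rw [← sum_isolated_prod_chanWt α (fun y => (s y).1) (fun y => (s y).2), mul_sum, sum_filter]
        simp only [wt_eq_prod_nodeWt_mul_prod_chanWt]
    _ = _ := by
        rw [sum_prod_mul_prod_erase (nodeWt μ K) (fun s s' => nonadjProb α s.2 s'.2) x,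
          Fintype.card_fin]

lemma pr_isolated (hμsum : ∑ i, μ i = 1) (hK : ∀ i, K i ≤ P) (α : ℝ) (x : Fin n) :
    pr μ K α (fun c : Config n r P => Isolated c x) =
      ∑ i, μ i * (1 - α * lamb μ K P i) ^ (n - 1) := by
  have hring (i : Fin (r + 1)) (S : Finset (Fin P)) :
      ringWt (K i) S * (∑ s, nodeWt μ K s * nonadjProb α S s.2) ^ (n - 1) =
        ringWt (K i) S * (1 - α * lamb μ K P i) ^ (n - 1) := by
    by_cases hS : #S = K i
    · rw [sum_nodeWt_mul_nonadjProb hμsum hK α hS]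
    · simp [ringWt, hS]
  rw [pr_isolated_eq_sum_nodeWt, Fintype.sum_prod_type]
  refine sum_congr rfl fun i _ => ?_
  simp only [nodeWt, mul_assoc] at hring ⊢
  simp only [hring, ← mul_sum, ← sum_mul, sum_ringWt (hK i), one_mul]

lemma pr_isolated_le (hμ : ∀ i, 0 ≤ μ i) (hμsum : ∑ i, μ i = 1) (hmono : Monotone K)
    (hK : ∀ i, K i ≤ P) (hα : α ∈ Set.Icc (0 : ℝ) 1) (x : Fin n) :
    pr μ K α (fun c : Config n r P => Isolated c x) ≤ (1 - α * lamb μ K P 0) ^ (n - 1) := by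
  rw [pr_isolated hμsum hK]
  calc ∑ i, μ i * (1 - α * lamb μ K P i) ^ (n - 1)
    _ ≤ ∑ i, μ i * (1 - α * lamb μ K P 0) ^ (n - 1) := by
        refine sum_le_sum fun i _ => mul_le_mul_of_nonneg_left (pow_le_pow_left₀ ?_ ?_ _) (hμ i)
        · exact sub_nonneg.2 (mul_lamb_le_one hμ hμsum K P hα i)
        · exact sub_le_sub_left
            (mul_le_mul_of_nonneg_left (lamb_mono hμ hmono P (Fin.zero_le i)) hα.1) 1
    _ = (1 - α * lamb μ K P 0) ^ (n - 1) := by rw [← sum_mul, hμsum, one_mul]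

lemma pr_exists_isolated_le (hμ : ∀ i, 0 ≤ μ i) (hμsum : ∑ i, μ i = 1) (hmono : Monotone K)
    (hK : ∀ i, K i ≤ P) (hα : α ∈ Set.Icc (0 : ℝ) 1) (n : ℕ) :
    pr μ K α (fun c : Config n r P => ∃ x, Isolated c x) ≤
      n * (1 - α * lamb μ K P 0) ^ (n - 1) :=
  calc pr μ K α (fun c : Config n r P => ∃ x, Isolated c x)
    _ ≤ ∑ x, pr μ K α (fun c : Config n r P => Isolated c x) :=
        pr_exists_le_sum hμ K hα fun x c => Isolated c x
    _ ≤ ∑ _x : Fin n, (1 - α * lamb μ K P 0) ^ (n - 1) :=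
        sum_le_sum fun x _ => pr_isolated_le hμ hμsum hmono hK hα x
    _ = n * (1 - α * lamb μ K P 0) ^ (n - 1) := by simp

end Isolation

section Asymptotics

variable {p : ℕ → ℝ}

lemma one_sub_pow_pred_le_exp {x : ℝ} (hx : x ≤ 1) {n : ℕ} (hn : n ≠ 0) :
    (1 - x) ^ (n - 1) ≤ Real.exp (1 - n * x) :=
  calc (1 - x) ^ (n - 1)
    _ ≤ Real.exp (-x) ^ (n - 1) :=
        pow_le_pow_left₀ (sub_nonneg.2 hx) (Real.one_sub_le_exp_neg x) _
    _ = Real.exp (x - n * x) := by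
        rw [← Real.exp_nat_mul, Nat.cast_pred (Nat.pos_of_ne_zero hn)]
        ring_nf
    _ ≤ Real.exp (1 - n * x) := by gcongr

lemma tendsto_natCast_mul_one_sub_pow_pred (hp : ∀ n, p n ≤ 1)
    (h : Tendsto (fun n : ℕ => n * p n - Real.log n) atTop atTop) :
    Tendsto (fun n : ℕ => n * (1 - p n) ^ (n - 1)) atTop (nhds 0) := by
  have hexp : Tendsto (fun n : ℕ => Real.exp (1 - (n * p n - Real.log n))) atTop (nhds 0) :=
    Real.tendsto_exp_atBot.comp (tendsto_const_nhds.add_atBot (tendsto_neg_atTop_atBot.comp h))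
  refine squeeze_zero' (.of_forall fun n => ?_) ?_ hexp
  · exact mul_nonneg n.cast_nonneg (pow_nonneg (sub_nonneg.2 (hp n)) _)
  filter_upwards [eventually_ne_atTop 0] with n hn
  have hn_pos : (0 : ℝ) < n := by positivity
  calc (n : ℝ) * (1 - p n) ^ (n - 1)
    _ ≤ n * Real.exp (1 - n * p n) := by gcongr; exact one_sub_pow_pred_le_exp (hp n) hn
    _ = Real.exp (1 - (n * p n - Real.log n)) := by
        rw [sub_sub_eq_add_sub, add_sub_right_comm, Real.exp_add, Real.exp_log hn_pos, mul_comm]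

lemma tendsto_natCast_mul_sub_log_atTop {cseq : ℕ → ℝ} {c : ℝ}
    (hp : ∀ᶠ n : ℕ in atTop, p n = cseq n * Real.log n / n)
    (hc : Tendsto cseq atTop (nhds c)) (hcgt : 1 < c) :
    Tendsto (fun n : ℕ => n * p n - Real.log n) atTop atTop := by
  have hlog : Tendsto (fun n : ℕ => Real.log n) atTop atTop :=
    Real.tendsto_log_atTop.comp tendsto_natCast_atTop_atTop
  refine ((hc.sub_const 1).pos_mul_atTop (sub_pos.2 hcgt) hlog).congr' ?_
  filter_upwards [hp, eventually_ne_atTop 0] with n hpn hn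
  rw [hpn]
  field_simp

end Asymptotics

theorem isolated_nodes_one_law_general {r : ℕ → ℕ} {μ : ∀ n, Fin (r n + 1) → ℝ}
    (hμ : ∀ n i, 0 ≤ μ n i) (hμsum : ∀ n, ∑ i, μ n i = 1)
    {K : ∀ n, Fin (r n + 1) → ℕ} {P : ℕ → ℕ} {α : ℕ → ℝ}
    (hKmono : ∀ n, Monotone (K n)) (hKP : ∀ n, K n (Fin.last (r n)) ≤ P n)
    (hα : ∀ n, α n ∈ Set.Icc (0 : ℝ) 1)
    (hΛ : Tendsto (fun n : ℕ => n * (α n * lamb (μ n) (K n) (P n) 0) - Real.log n) atTop atTop) :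
    Tendsto
      (fun n => pr (μ n) (K n) (α n) (fun cfg : Config n (r n) (P n) => NoIsolatedNodes cfg))
      atTop (nhds 1) := by
  have hK (n : ℕ) (i : Fin (r n + 1)) : K n i ≤ P n := (hKmono n (Fin.le_last i)).trans (hKP n)
  have hisolated : Tendsto (fun n => pr (μ n) (K n) (α n)
      fun cfg : Config n (r n) (P n) => ∃ x, Isolated cfg x) atTop (nhds 0) :=
    squeeze_zero (fun n => pr_nonneg (hμ n) (K n) (hα n) _)
      (fun n => pr_exists_isolated_le (hμ n) (hμsum n) (hKmono n) (hK n) (hα n) n)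
      (tendsto_natCast_mul_one_sub_pow_pred
        (fun n => mul_lamb_le_one (hμ n) (hμsum n) (K n) (P n) (hα n) 0) hΛ)
  simpa only [pr_noIsolatedNodes_eq (hμsum _) (hK _), sub_zero] using hisolated.const_sub 1

/-- one-law for absence of isolated nodes:
under the scaling `Λ₁(n) = αₙ λ₁(n) = cₙ log n / n` with `cₙ → c > 1`, the probability
that `G(n; μ, Kₙ, Pₙ, αₙ)` has no isolated nodes tends to `1`. -/
theorem isolated_nodes_one_law {r : ℕ} (μ : Fin (r + 1) → ℝ)
    (hμpos : ∀ i, 0 < μ i) (hμsum : ∑ i, μ i = 1)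
    (K : ℕ → Fin (r + 1) → ℕ) (P : ℕ → ℕ) (α : ℕ → ℝ)
    (hK1 : ∀ n, 1 ≤ K n 0) (hKmono : ∀ n, Monotone (K n))
    (hKP : ∀ n, 2 * K n (Fin.last r) ≤ P n)
    (hα : ∀ n, α n ∈ Set.Ioo (0 : ℝ) 1)
    (cseq : ℕ → ℝ) (c : ℝ)
    (hscal : ∀ n, 2 ≤ n → α n * lamb μ (K n) (P n) 0 = cseq n * Real.log n / n)
    (hc : Tendsto cseq atTop (nhds c)) (hcgt : 1 < c) :
    Tendsto (fun n => pr μ (K n) (α n) (fun cfg : Config n r (P n) => NoIsolatedNodes cfg))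
      atTop (nhds 1) :=
  isolated_nodes_one_law_general (fun _ i => (hμpos i).le) (fun _ => hμsum) hKmono
    (fun n => (Nat.le_mul_of_pos_left _ two_pos).trans (hKP n))
    (fun n => Set.Ioo_subset_Icc_self (hα n))
    (tendsto_natCast_mul_sub_log_atTop (eventually_atTop.2 ⟨2, hscal⟩) hc hcgt)
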